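/- Let d ∈ ℕ, d ≥ 1, and let G : ℝ^d → ℝ^d be continuously differentiable such that div G is Lebesgue integrable on ℝ^d and ‖G(x)‖ · ‖x‖^{d−1} → 0 as ‖x‖ → ∞ (i.e., ‖G(x)‖ = o(‖x‖^{1−d})). Then ∫_{ℝ^d} div G(x) dx = 0. -/

import Mathlib

/-!
The divergence theorem on the cube `[-R, R]^d` turns the integral of `div G` into `2d` integrals
over faces. On a face `‖x‖ ≥ R`, so once `R` is large `‖G x‖ ≤ ε / R^(d-1)`, while the face has
area `(2R)^(d-1)`. The total flux is therefore at most `2d * 2^(d-1) * ε`, independently of `R`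
(`abs_setIntegral_cube_le`), and hence tends to `0`. The cubes exhaust the space and `div G` is
integrable, so the integrals over cubes tend to the full integral.

Everything is transported along `WithLp.toLp 2`, which preserves volume, to `Fin d → ℝ`, whose
sup-norm closed balls are the cubes.
-/

open MeasureTheory Filter
open scoped RealInnerProductSpace ContDiff

/-- Divergence of a vector field on `ℝ^d`: `div F x = ∑ i ∂Fᵢ/∂xᵢ (x)`. -/
noncomputable def diverg {d : ℕ} (F : EuclideanSpace ℝ (Fin d) → EuclideanSpace ℝ (Fin d))
    (x : EuclideanSpace ℝ (Fin d)) : ℝ :=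
  ∑ i, fderiv ℝ F x (EuclideanSpace.single i 1) i

/-- `∇ log f = (∇ f) / f` for a strictly positive differentiable `f`. -/
noncomputable def gradLog {d : ℕ} (f : EuclideanSpace ℝ (Fin d) → ℝ)
    (x : EuclideanSpace ℝ (Fin d)) : EuclideanSpace ℝ (Fin d) :=
  (f x)⁻¹ • gradient f x

/-- Laplacian `Δ f = div (∇ f)`. -/
noncomputable def lap {d : ℕ} (f : EuclideanSpace ℝ (Fin d) → ℝ)
    (x : EuclideanSpace ℝ (Fin d)) : ℝ :=
  diverg (fun y => gradient f y) x

/-- Rescaled kernel `κ^h(x) = h^{-d} κ(x/h)`. -/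
noncomputable def resc {d : ℕ} (κ : EuclideanSpace ℝ (Fin d) → ℝ) (h : ℝ)
    (x : EuclideanSpace ℝ (Fin d)) : ℝ :=
  (h ^ d)⁻¹ * κ (h⁻¹ • x)

/-- Kernel density estimate `KDE_κ^h[X](x) = (1/J) ∑ⱼ κ^h(x - Xⱼ)`. -/
noncomputable def kde {d J : ℕ} (κ : EuclideanSpace ℝ (Fin d) → ℝ) (h : ℝ)
    (X : Fin J → EuclideanSpace ℝ (Fin d)) (x : EuclideanSpace ℝ (Fin d)) : ℝ :=
  (1 / (J : ℝ)) * ∑ j, resc κ h (x - X j)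

lemma pi_closedBall_zero_eq_Icc {ι : Type*} [Fintype ι] {R : ℝ} (hR : 0 ≤ R) :
    Metric.closedBall (0 : ι → ℝ) R = Set.Icc (fun _ => -R) (fun _ => R) := by
  ext x
  simp only [mem_closedBall_zero_iff, pi_norm_le_iff_of_nonneg hR, Real.norm_eq_abs, abs_le,
    Set.mem_Icc, Pi.le_def, forall_and]

lemma continuous_diverg {d : ℕ} {G : EuclideanSpace ℝ (Fin d) → EuclideanSpace ℝ (Fin d)}
    (hG : ContDiff ℝ 1 G) : Continuous (diverg G) := by
  have h := hG.continuous_fderiv (by norm_num)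
  unfold diverg
  fun_prop

/-- The flux through one face of the cube `[-R, R]^(n+1)` is small where `G` is small. -/
lemma abs_face_integral_le {n : ℕ}
    {G : EuclideanSpace ℝ (Fin (n + 1)) → EuclideanSpace ℝ (Fin (n + 1))} {ε R : ℝ} (hR : 0 < R)
    (hb : ∀ x, R ≤ ‖x‖ → ‖G x‖ * ‖x‖ ^ n ≤ ε) (i : Fin (n + 1)) {c : ℝ} (hc : |c| = R) :
    |∫ y in Set.Icc (fun _ : Fin n => -R) (fun _ => R),
      G (WithLp.toLp 2 (i.insertNth c y : Fin (n + 1) → ℝ)) i| ≤ 2 ^ n * ε := by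
  have hle : (fun _ : Fin n => -R) ≤ fun _ => R := fun _ => by simp; linarith
  have hpt : ∀ y : Fin n → ℝ,
      ‖G (WithLp.toLp 2 (i.insertNth c y : Fin (n + 1) → ℝ)) i‖ ≤ ε / R ^ n := by
    intro y
    set x : EuclideanSpace ℝ (Fin (n + 1)) := WithLp.toLp 2 (i.insertNth c y)
    have hx : R ≤ ‖x‖ := by
      have := PiLp.norm_apply_le x i
      simpa [x, hc] using this
    rw [le_div_iff₀ (by positivity)]
    calc ‖G x i‖ * R ^ n ≤ ‖G x‖ * ‖x‖ ^ n := by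
          gcongr
          exact PiLp.norm_apply_le (G x) i
      _ ≤ ε := hb x hx
  have h := norm_setIntegral_le_of_norm_le_const (μ := volume)
    (s := Set.Icc (fun _ : Fin n => -R) (fun _ => R)) isCompact_Icc.measure_lt_top
    (fun y _ => hpt y)
  rw [Real.norm_eq_abs] at h
  refine h.trans (le_of_eq ?_)
  rw [Measure.real, Real.volume_Icc_pi_toReal hle]
  simp only [sub_neg_eq_add, Finset.prod_const, Finset.card_univ, Fintype.card_fin]
  rw [← two_mul, mul_pow]
  field_simp

lemma abs_setIntegral_cube_le {n : ℕ}
    {G : EuclideanSpace ℝ (Fin (n + 1)) → EuclideanSpace ℝ (Fin (n + 1))} (hG : ContDiff ℝ 1 G)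
    {ε R : ℝ} (hR : 0 < R) (hb : ∀ x, R ≤ ‖x‖ → ‖G x‖ * ‖x‖ ^ n ≤ ε) :
    |∫ x in Metric.closedBall (0 : Fin (n + 1) → ℝ) R, diverg G (WithLp.toLp 2 x)| ≤
      (n + 1) * (2 * (2 ^ n * ε)) := by
  rw [pi_closedBall_zero_eq_Icc hR.le]
  let e := (PiLp.continuousLinearEquiv 2 ℝ (fun _ : Fin (n + 1) => ℝ)).symm
  have hd (x : Fin (n + 1) → ℝ) (i : Fin (n + 1)) :
      HasFDerivAt (fun x : Fin (n + 1) → ℝ => G (WithLp.toLp 2 x) i)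
        ((EuclideanSpace.proj i : EuclideanSpace ℝ (Fin (n + 1)) →L[ℝ] ℝ) ∘L
          (fderiv ℝ G (WithLp.toLp 2 x)) ∘L (e : (Fin (n + 1) → ℝ) →L[ℝ] _)) x := by
    have h1 : HasFDerivAt G (fderiv ℝ G (WithLp.toLp 2 x)) (e x) :=
      (hG.differentiable (by norm_num) _).hasFDerivAt
    exact (EuclideanSpace.proj i : EuclideanSpace ℝ (Fin (n + 1)) →L[ℝ] ℝ).hasFDerivAt.comp x
      (h1.comp x e.hasFDerivAt)
  have hcont : Continuous fun x : Fin (n + 1) → ℝ => diverg G (WithLp.toLp 2 x) :=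
    (continuous_diverg hG).comp e.continuous
  have key := integral_divergence_of_hasFDerivAt_off_countable'
    (fun _ : Fin (n + 1) => -R) (fun _ => R) (fun _ => by simp; linarith)
    (fun i x => G (WithLp.toLp 2 x) i) _ ∅ Set.countable_empty
    (fun i x _ => (hd x i).continuousAt.continuousWithinAt) (fun x _ i => hd x i)
    (hcont.continuousOn.integrableOn_compact isCompact_Icc)
  change ∫ x in Set.Icc (fun _ : Fin (n + 1) => -R) (fun _ => R), diverg G (WithLp.toLp 2 x) = _
    at key
  rw [key]
  calc _ ≤ ∑ i : Fin (n + 1), (2 * (2 ^ n * ε)) := by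
        refine (Finset.abs_sum_le_sum_abs _ _).trans (Finset.sum_le_sum fun i _ => ?_)
        refine (abs_sub _ _).trans ?_
        rw [two_mul]
        exact add_le_add (abs_face_integral_le hR hb i (abs_of_pos hR))
          (abs_face_integral_le hR hb i (by rw [abs_neg, abs_of_pos hR]))
    _ = _ := by simp

/-- If `G : ℝ^d → ℝ^d` (`d ≥ 1`) is continuously differentiable, `div G` is
Lebesgue integrable, and `‖G(x)‖ ‖x‖^{d-1} → 0` as `‖x‖ → ∞`, then `∫ div G = 0`. -/
theorem integral_divergence_eq_zero_of_decay {d : ℕ} (hd : 1 ≤ d)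
    (G : EuclideanSpace ℝ (Fin d) → EuclideanSpace ℝ (Fin d))
    (hG : ContDiff ℝ 1 G)
    (hint : Integrable (fun x => diverg G x))
    (hdecay : Tendsto (fun x : EuclideanSpace ℝ (Fin d) => ‖G x‖ * ‖x‖ ^ (d - 1))
      (cocompact (EuclideanSpace ℝ (Fin d))) (nhds 0)) :
    (∫ x, diverg G x) = 0 := by
  obtain ⟨n, rfl⟩ : ∃ n, d = n + 1 := ⟨d - 1, by omega⟩
  rw [Nat.add_sub_cancel] at hdecay
  have hvol := PiLp.volume_preserving_toLp (Fin (n + 1))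
  have hemb : MeasurableEmbedding (WithLp.toLp 2 : (Fin (n + 1) → ℝ) → _) :=
    (MeasurableEquiv.toLp 2 (Fin (n + 1) → ℝ)).measurableEmbedding
  have hint' : Integrable fun x : Fin (n + 1) → ℝ => diverg G (WithLp.toLp 2 x) :=
    (hvol.integrable_comp_emb hemb).2 hint
  rw [← hvol.integral_comp hemb]
  refine (aecover_closedBall (x := (0 : Fin (n + 1) → ℝ)) tendsto_id).integral_eq_of_tendsto
    _ hint' ?_
  rw [Metric.tendsto_nhds]
  intro δ hδ
  -- Chosen so that the bound of `abs_setIntegral_cube_le` becomes `δ / 2`.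
  set ε : ℝ := δ / (4 * (n + 1) * 2 ^ n) with hε
  have hεpos : 0 < ε := by positivity
  have hev := hdecay.eventually_le_const hεpos
  rw [← Metric.cobounded_eq_cocompact, ← comap_norm_atTop, eventually_comap] at hev
  obtain ⟨R₀, hR₀⟩ := eventually_atTop.1 hev
  filter_upwards [eventually_ge_atTop R₀, eventually_gt_atTop 0] with R hR hRpos
  rw [Real.dist_eq, sub_zero]
  have := abs_setIntegral_cube_le hG hRpos (ε := ε) fun x hx => hR₀ ‖x‖ (hR.trans hx) x rfl
  have h2 : ((n : ℝ) + 1) * (2 * (2 ^ n * ε)) = δ / 2 := by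
    rw [hε]; field_simp; norm_num
  rw [h2] at this
  exact this.trans_lt (half_lt_self hδ)
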